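/- Let M̄ = (M_n : n < ω) ∈ 𝕄 and suppose that for all but finitely many n the action of Aut(M_n) on M_n is free. Then every elementary substructure M of ∏_n M_n admits a finite base. -/

import Mathlib

open FirstOrder

universe u v w

namespace ScottTools

variable (L : FirstOrder.Language.{u, v}) (M : Type w) (N : Type w) [L.Structure M] [L.Structure N]

/-- Two tuples (of the same length) have the same quantifier-free type. -/
def QFEquiv {n : ℕ} (a : Fin n → M) (b : Fin n → N) : Prop :=
  ∀ φ : L.Formula (Fin n), φ.IsQF → (φ.Realize a ↔ φ.Realize b)

/-- The ordinal-indexed back-and-forth equivalence `(M, ā) ≡_α (N, b̄)`: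
`≡₀` is equality of quantifier-free types, `≡_{α+1}` is the back-and-forth condition
with respect to `≡_α`, and limit stages are intersections. -/
def BFEquiv : Ordinal.{w} → (n : ℕ) → (Fin n → M) → (Fin n → N) → Prop
  | α, n, a, b =>
    QFEquiv L M N a b ∧
    ∀ β : Ordinal.{w}, β < α →
      (∀ x : M, ∃ y : N, BFEquiv β (n + 1) (Fin.snoc a x) (Fin.snoc b y)) ∧
      (∀ y : N, ∃ x : M, BFEquiv β (n + 1) (Fin.snoc a x) (Fin.snoc b y))
  termination_by α => α

/-- `(M, ā) ≡_∞ (N, b̄)`: back-and-forth equivalent for all ordinals. -/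
def BFEquivInf (n : ℕ) (a : Fin n → M) (b : Fin n → N) : Prop :=
  ∀ α : Ordinal.{w}, BFEquiv L M N α n a b

/-- The Scott rank of a structure: the least ordinal `α` such that any two finite tuples
that are `≡_α`-equivalent are `≡_∞`-equivalent. -/
noncomputable def ScottRank : Ordinal.{w} :=
  sInf {α : Ordinal.{w} | ∀ (n : ℕ) (a b : Fin n → M),
    BFEquiv L M M α n a b → BFEquivInf L M M n a b}

/-- `B` is a base for `M`: distinct elements of `M` have distinct complete first-order
types over `B`. -/
def IsBase (B : Set M) : Prop :=
  ∀ a b : M,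
    (∀ (k : ℕ) (p : Fin k → M), (∀ i, p i ∈ B) →
      ∀ φ : L.Formula (Fin (k + 1)),
        (φ.Realize (Fin.snoc p a) ↔ φ.Realize (Fin.snoc p b))) →
    a = b

end ScottTools

namespace ProdStr

open FirstOrder

/-- A purely relational language, with relation symbols `Rs k` of arity `k`. -/
def relLang (Rs : ℕ → Type) : FirstOrder.Language :=
  ⟨fun _ => Empty, Rs⟩

/-- The combined language of the product `∏ₙ Mₙ`: the (disjoint) union of all the
relational languages `ℒₙ` (with relations `Rs n k` of arity `k`), together with new
binary relation symbols `Eₙ` for `n < ω`. -/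
def prodLang (Rs : ℕ → ℕ → Type) : FirstOrder.Language :=
  ⟨fun _ => Empty, fun k => (Σ n : ℕ, Rs n k) ⊕ (PLift (k = 2) × ℕ)⟩

/-- The product structure `∏ₙ Mₙ`: `E_m(a,b)` iff `a m = b m`, and `R(ā)` iff
`Mₘ ⊨ R(ā(m))` for `R` a relation of `ℒₘ`. -/
instance prodStructure (Rs : ℕ → ℕ → Type) (Mf : ℕ → Type)
    [∀ n, (relLang (Rs n)).Structure (Mf n)] :
    (prodLang Rs).Structure (∀ n, Mf n) where
  funMap := fun f _ => f.elim
  RelMap := fun {k} r x =>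
    match r with
    | Sum.inl ⟨n, R⟩ =>
        Language.Structure.RelMap (L := relLang (Rs n)) (M := Mf n)
          (R : (relLang (Rs n)).Relations k) (fun i => x i n)
    | Sum.inr ⟨h, m⟩ => x (Fin.cast h.down.symm 0) m = x (Fin.cast h.down.symm 1) m

/-- The action of `Aut(Mₙ)` on `Mₙ` is free: any automorphism with a fixed point is the
identity. -/
def FreeAut (Rs : ℕ → ℕ → Type) (Mf : ℕ → Type)
    [∀ n, (relLang (Rs n)).Structure (Mf n)] (n : ℕ) : Prop :=
  ∀ σ : Mf n ≃[relLang (Rs n)] Mf n, ∀ x : Mf n, σ x = x → ∀ y : Mf n, σ y = y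

end ProdStr

open ScottTools ProdStr FirstOrder

/-!
Each finite factor `M_n` is interpreted in the product, with `E_n` as equality, so elements `a`, `b`
of `M` with the same type over `B` have coordinates `a n`, `b n` with the same type over
`{p n | p ∈ B}` in `M_n`. In a finite structure a single formula in an enumeration of the universe
says that a self-map is an automorphism; hence elements with the same type are conjugate by an
automorphism fixing the parameters. So `B` is a base as soon as, for each `n`, every automorphism
of `M_n` fixing `{p n | p ∈ B}` pointwise fixes all coordinates `a n` with `a ∈ M`. Where the action
is free one element of `B` suffices; on the finitely many other factors, which are finite, finitely
many elements of `B` realize all the values that occur in `M`.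
-/

section SameTypeOver

variable {L : FirstOrder.Language.{u, v}} {M : Type w} [L.Structure M]

variable (L) in
/-- The elements `a` and `b` have the same complete first-order type over the set `B`. The
parameters come first in the tuples, as in `IsBase`. -/
def SameTypeOver (B : Set M) (a b : M) : Prop :=
  ∀ (k : ℕ) (p : Fin k → M), (∀ i, p i ∈ B) → ∀ φ : L.Formula (Fin (k + 1)),
    (φ.Realize (Fin.snoc p a) ↔ φ.Realize (Fin.snoc p b))

theorem SameTypeOver.image {L' : FirstOrder.Language} {M' : Type*} [L'.Structure M']
    {B : Set M} {a b : M} (h : SameTypeOver L B a b) (f : M → M')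
    (hf : ∀ {k : ℕ} (φ : L'.Formula (Fin k)), ∃ ψ : L.Formula (Fin k), ∀ x : Fin k → M,
      ψ.Realize x ↔ φ.Realize (f ∘ x)) :
    SameTypeOver L' (f '' B) (f a) (f b) := by
  intro k p hp φ
  choose q hqB hqp using hp
  obtain rfl : f ∘ q = p := funext hqp
  obtain ⟨ψ, hψ⟩ := hf φ
  rw [← Fin.comp_snoc, ← Fin.comp_snoc, ← hψ, ← hψ]
  exact h k q hqB ψ

end SameTypeOver

section FiniteStructure

variable {L : FirstOrder.Language.{u, v}} {M : Type w} [L.Structure M] [Finite M]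

theorem exists_equiv_coe_eq_of_realize_imp (f : M → M)
    (hf : ∀ φ : L.Formula M, φ.Realize id → φ.Realize f) : ∃ σ : M ≃[L] M, ⇑σ = f := by
  have realize_comp_iff : ∀ ⦃k : ℕ⦄ (φ : L.Formula (Fin k)) (x : Fin k → M),
      φ.Realize (f ∘ x) ↔ φ.Realize x := by
    intro k φ x
    have imp_of_realize (ψ : L.Formula (Fin k)) (hψ : ψ.Realize x) : ψ.Realize (f ∘ x) := by
      simpa using hf (ψ.relabel x) (by simpa using hψ)
    refine ⟨fun hfx => ?_, imp_of_realize φ⟩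
    by_contra hx
    exact imp_of_realize φ.not (by simpa using hx) hfx
  let g : M ↪ₑ[L] M := ⟨f, realize_comp_iff⟩
  exact ⟨⟨Equiv.ofBijective g (Finite.injective_iff_bijective.1 g.injective), g.map_fun,
    g.map_rel⟩, rfl⟩

theorem exists_formula_realize_iff_exists_equiv :
    ∃ χ : L.Formula M, ∀ f : M → M, χ.Realize f ↔ ∃ σ : M ≃[L] M, ⇑σ = f := by
  have separate (f : {f : M → M // ¬ ∃ σ : M ≃[L] M, ⇑σ = f}) :
      ∃ φ : L.Formula M, φ.Realize id ∧ ¬ φ.Realize f.1 := by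
    by_contra! h
    exact f.2 (exists_equiv_coe_eq_of_realize_imp f.1 h)
  choose φ hφ_id hφ using separate
  refine ⟨Language.Formula.iInf φ, fun f => ?_⟩
  rw [Language.Formula.realize_iInf]
  constructor
  · intro h
    by_contra hf
    exact hφ ⟨f, hf⟩ (h ⟨f, hf⟩)
  · rintro ⟨σ, rfl⟩ f
    exact (Language.StrongHomClass.realize_formula σ (φ f)).2 (hφ_id f)

theorem exists_equiv_comp_eq_of_realize_imp {α : Type*} [Finite α] {x y : α → M}
    (h : ∀ φ : L.Formula α, φ.Realize x → φ.Realize y) : ∃ σ : M ≃[L] M, σ ∘ x = y := by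
  obtain ⟨χ, hχ⟩ := exists_formula_realize_iff_exists_equiv (L := L) (M := M)
  let conjugate : L.Formula α := Language.Formula.iExs M
    (Language.Formula.iInf (fun i =>
      (Language.Term.var (Sum.inl i)).equal (Language.Term.var (Sum.inr (x i)))) ⊓
      χ.relabel Sum.inr)
  have realize_conjugate (z : α → M) : conjugate.Realize z ↔ ∃ σ : M ≃[L] M, z = σ ∘ x := by
    simp only [conjugate, Language.Formula.realize_iExs, Language.Formula.realize_inf,
      Language.Formula.realize_iInf, Language.Formula.realize_equal,
      Language.Formula.realize_relabel, Language.Term.realize_var, Sum.elim_inl, Sum.elim_inr,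
      Sum.elim_comp_inr, hχ, funext_iff (f := z), Function.comp_apply]
    constructor
    · rintro ⟨_, hz, σ, rfl⟩
      exact ⟨σ, hz⟩
    · rintro ⟨σ, hz⟩
      exact ⟨σ, hz, σ, rfl⟩
  obtain ⟨σ, hσ⟩ := (realize_conjugate y).1
    (h conjugate ((realize_conjugate x).2 ⟨Language.Equiv.refl L M, rfl⟩))
  exact ⟨σ, hσ.symm⟩

theorem SameTypeOver.exists_equiv {B : Set M} {a b : M} (h : SameTypeOver L B a b) :
    ∃ σ : M ≃[L] M, (∀ p ∈ B, σ p = p) ∧ σ a = b := by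
  obtain ⟨k, ⟨e⟩⟩ := Finite.exists_equiv_fin B
  let p : Fin k → M := fun i => e.symm i
  obtain ⟨σ, hσ⟩ := exists_equiv_comp_eq_of_realize_imp (L := L) (x := Fin.snoc p a)
    (y := Fin.snoc p b) fun φ => (h k p (fun i => (e.symm i).2) φ).1
  rw [Fin.comp_snoc] at hσ
  obtain ⟨hσp, hσa⟩ := Fin.snoc_injective2 hσ
  refine ⟨σ, fun q hq => ?_, hσa⟩
  simpa [p] using congrFun hσp (e ⟨q, hq⟩)

end FiniteStructure

section Product

variable {Rs : ℕ → ℕ → Type}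

/-- The inclusion of the language `ℒ_n` of a factor into the language of the product. -/
def factorHom (Rs : ℕ → ℕ → Type) (n : ℕ) : relLang (Rs n) →ᴸ prodLang Rs where
  onFunction := fun _ f => f.elim
  onRelation := fun _ R => Sum.inl ⟨n, R⟩

/-- The relation symbol `E_n` of the language of the product. -/
def eqRel (Rs : ℕ → ℕ → Type) (n : ℕ) : (prodLang Rs).Relations 2 :=
  Sum.inr ⟨⟨rfl⟩, n⟩

/-- The interpretation of the factor `M_n` in the product: equality becomes `E_n`, everything
else is unchanged. This is not `LHom.onBoundedFormula`, which keeps equality. -/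
def factorFormula {α : Type*} (n : ℕ) :
    ∀ {k : ℕ}, (relLang (Rs n)).BoundedFormula α k → (prodLang Rs).BoundedFormula α k
  | _, .falsum => .falsum
  | _, .equal t₁ t₂ =>
      (eqRel Rs n).boundedFormula₂ ((factorHom Rs n).onTerm t₁) ((factorHom Rs n).onTerm t₂)
  | _, .rel R ts =>
      ((factorHom Rs n).onRelation R).boundedFormula fun i => (factorHom Rs n).onTerm (ts i)
  | _, .imp φ ψ => (factorFormula n φ).imp (factorFormula n ψ)
  | _, .all φ => (factorFormula n φ).all

variable {Mf : ℕ → Type} [∀ n, (relLang (Rs n)).Structure (Mf n)]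

theorem relMap_eqRel (n : ℕ) (x : Fin 2 → ∀ m, Mf m) :
    Language.Structure.RelMap (eqRel Rs n) x ↔ x 0 n = x 1 n :=
  Iff.rfl

theorem relMap_factorHom {n k : ℕ} (R : (relLang (Rs n)).Relations k)
    (x : Fin k → ∀ m, Mf m) :
    Language.Structure.RelMap ((factorHom Rs n).onRelation R) x ↔
      Language.Structure.RelMap R fun i => x i n :=
  Iff.rfl

theorem realize_onTerm_factorHom {α : Type*} {n : ℕ} (t : (relLang (Rs n)).Term α)
    (v : α → ∀ m, Mf m) :
    ((factorHom Rs n).onTerm t).realize v n = t.realize (Function.eval n ∘ v) := by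
  cases t with
  | var i => rfl
  | func f ts => exact f.elim

theorem realize_factorFormula [∀ m, Nonempty (Mf m)] {α : Type*} {n k : ℕ}
    (φ : (relLang (Rs n)).BoundedFormula α k) (v : α → ∀ m, Mf m) (xs : Fin k → ∀ m, Mf m) :
    (factorFormula n φ).Realize v xs ↔
      φ.Realize (Function.eval n ∘ v) (Function.eval n ∘ xs) := by
  induction φ with
  | falsum => rfl
  | equal t₁ t₂ =>
    simp only [factorFormula, Language.BoundedFormula.realize_rel₂, relMap_eqRel,
      Matrix.cons_val_zero, Matrix.cons_val_one, realize_onTerm_factorHom, Sum.comp_elim,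
      Language.BoundedFormula.Realize]
  | rel R ts =>
    simp only [factorFormula, Language.BoundedFormula.realize_rel, relMap_factorHom,
      realize_onTerm_factorHom, Sum.comp_elim, Language.BoundedFormula.Realize]
  | imp φ ψ ihφ ihψ =>
    simp only [factorFormula, Language.BoundedFormula.realize_imp, ihφ, ihψ]
  | all φ ih =>
    simp only [factorFormula, Language.BoundedFormula.realize_all, ih, Fin.comp_snoc,
      (Function.surjective_eval n).forall]

theorem SameTypeOver.eval [∀ m, Nonempty (Mf m)] {B : Set (∀ m, Mf m)} {a b : ∀ m, Mf m}
    (h : SameTypeOver (prodLang Rs) B a b) (n : ℕ) :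
    SameTypeOver (relLang (Rs n)) (Function.eval n '' B) (a n) (b n) :=
  h.image (Function.eval n) fun φ => ⟨factorFormula n φ, fun x => by
    rw [Language.Formula.Realize, realize_factorFormula, Language.Formula.Realize,
      Subsingleton.elim (Function.eval n ∘ default) default]⟩

theorem isBase_of_forall_equiv_fixing [∀ n, Finite (Mf n)]
    (S : (prodLang Rs).ElementarySubstructure (∀ n, Mf n)) (B : Set S)
    (hB : ∀ (n : ℕ) (σ : Mf n ≃[relLang (Rs n)] Mf n),
      (∀ p ∈ B, σ (p.1 n) = p.1 n) → ∀ a : S, σ (a.1 n) = a.1 n) :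
    IsBase (prodLang Rs) S B := by
  intro a b (hab : SameTypeOver (prodLang Rs) B a b)
  have (n : ℕ) : Nonempty (Mf n) := ⟨a.1 n⟩
  have hab' : SameTypeOver (prodLang Rs) (S.subtype '' B) a.1 b.1 :=
    hab.image S.subtype fun φ => ⟨φ, fun x => (S.subtype.map_formula φ x).symm⟩
  ext n
  obtain ⟨σ, hσB, hσa⟩ := (hab'.eval n).exists_equiv
  rw [← hσa, hB n σ (fun p hp => hσB _ ⟨_, ⟨p, hp, rfl⟩, rfl⟩) a]

end Product

theorem exists_finite_set_forall_exists_apply_eq {X Y : Type*} [Finite Y] (f : X → Y) :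
    ∃ B : Set X, B.Finite ∧ ∀ a, ∃ p ∈ B, f p = f a :=
  ⟨Set.range (Set.rangeSplitting f), Set.finite_range _, fun a =>
    ⟨_, ⟨⟨f a, a, rfl⟩, rfl⟩, Set.apply_rangeSplitting f _⟩⟩

/-- If `M̄ ∈ 𝕄` and the action of `Aut(Mₙ)` on `Mₙ` is free for all but finitely many
`n`, then every elementary substructure of `∏ₙ Mₙ` admits a finite base. -/
theorem finite_base_of_ae_free (Rs : ℕ → ℕ → Type) (Mf : ℕ → Type)
    [∀ n, (relLang (Rs n)).Structure (Mf n)] [∀ n, Fintype (Mf n)]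
    (hcard : ∀ n, 2 ≤ Fintype.card (Mf n))
    (hfree : {n : ℕ | ¬ FreeAut Rs Mf n}.Finite)
    (S : (prodLang Rs).ElementarySubstructure (∀ n, Mf n)) :
    ∃ B : Set S, B.Finite ∧ IsBase (prodLang Rs) S B := by
  have : Finite {n : ℕ | ¬ FreeAut Rs Mf n} := hfree
  obtain ⟨B, hBfin, hB⟩ := exists_finite_set_forall_exists_apply_eq
    fun (a : S) (n : {n : ℕ | ¬ FreeAut Rs Mf n}) => a.1 n
  refine ⟨B, hBfin, isBase_of_forall_equiv_fixing S B fun n σ hσ a => ?_⟩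
  obtain ⟨p, hpB, hpa⟩ := hB a
  by_cases hn : FreeAut Rs Mf n
  · exact hn σ (p.1 n) (hσ p hpB) (a.1 n)
  · have hpan : p.1 n = a.1 n := congrFun hpa ⟨n, hn⟩
    rw [← hpan, hσ p hpB]
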